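/- Let A be a C*-algebra, and for j = 1, 2 let ι_j: 𝒦 → M(A) be a nondegenerate homomorphism, and suppose B_j is a C*-algebra isomorphic to the relative commutant C(A, ι_j). Then B_1 ≅ B_2 if and only if there is an automorphism α of A such that α ∘ ι_1 = ι_2 (using the canonical extension of α to M(A)). -/

import Mathlib

/-!
The structural fact is `A ≅ C(A, ι) ⊗ 𝒦`, with `c ⊗ u i j` corresponding to `c * ι(u i j)`; an
isomorphism `C(A, ι₁) ≅ C(A, ι₂)` tensored with the identity of `𝒦` is then the automorphism.
The argument avoids tensor products by working with the finite sums `∑ c i j * ι(u i j)`.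

Via the given isomorphism, both relative commutants are faithful images of one C⋆-algebra `B`
under `e₁` and `e₂`.  Write `p i j = ι₁(u i j)` and `q i j = ι₂(u i j)`.

* For a finite matrix `f` over `B`, the norms of `∑ e₁(f i j) p i j` and `∑ e₂(f i j) q i j` agree:
  both are values of injective, hence isometric, ⋆-homomorphisms on the C⋆-algebra `Mₙ(B)`
  (`norm_matSum_eq`).
* These sums are dense in `A` (`coe_mem_closure_matSum`).  By nondegeneracy the projections
  `∑_{i < n} p i i` form an approximate unit, so it suffices to write `p i i * a * p j j` as
  `c * p i j` with `c ∈ C(A, ι₁)`.  Such a `c` is the ampliation `∑ᵢ p i 0 * a' * p 0 i` of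
  `a' = p 0 i * a * p j 0`, a series converging strictly in `M(A)` (`exists_ampliation`).
* Hence the closure of the correspondence `∑ e₁(f i j) p i j ↦ ∑ e₂(f i j) q i j` is the graph of
  an automorphism `α` of `A`, and its extension to `M(A)` sends `p i j` to `q i j`
  (`exists_aut`).

Conversely, an extension `ᾱ` with `ᾱ ∘ ι₁ = ι₂` restricts to an isomorphism of the relative
commutants.
-/

open scoped MultiplierAlgebra

noncomputable section

/-! ## Framework

`𝓜(ℂ, A)` is the multiplier algebra `M(A)` of a (non-unital) C⋆-algebra `A`
(Mathlib's `DoubleCentralizer`), and `(a : 𝓜(ℂ, A))` is the canonical image of `a : A`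
in it. -/

/-- A system of matrix units `{u i j}` (indexed by `ℕ`) in a non-unital C⋆-algebra `K`,
whose linear span is dense.  A C⋆-algebra carrying such a system is precisely (i.e., is
⋆-isomorphic to) the C⋆-algebra `𝒦` of compact operators on a separable
infinite-dimensional Hilbert space. -/
structure MatrixUnits (K : Type*) [NonUnitalCStarAlgebra K] where
  u : ℕ → ℕ → K
  u_ne_zero : ∀ i j, u i j ≠ 0
  u_mul : ∀ i j k l, u i j * u k l = if j = k then u i l else 0
  star_u : ∀ i j, star (u i j) = u j i
  dense_span : Dense (Submodule.span ℂ (Set.range fun p : ℕ × ℕ => u p.1 p.2) : Set K)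

/-- `K` is (a copy of) the C⋆-algebra `𝒦` of compact operators on a separable
infinite-dimensional Hilbert space. -/
def IsCompactOperatorsAlgebra (K : Type*) [NonUnitalCStarAlgebra K] : Prop :=
  Nonempty (MatrixUnits K)

/-- A homomorphism `φ : A → M(B)` is *nondegenerate* if `φ(A)·B` is dense in `B`. -/
def Nondegenerate {A B : Type*} [NonUnitalCStarAlgebra A] [NonUnitalCStarAlgebra B]
    (φ : A →⋆ₙₐ[ℂ] 𝓜(ℂ, B)) : Prop :=
  ∀ b : B, (b : 𝓜(ℂ, B)) ∈
    closure (Submodule.span ℂ {x : 𝓜(ℂ, B) | ∃ (a : A) (c : B), x = φ a * c} : Set 𝓜(ℂ, B))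

/-- The `A`-relative commutant `C(A, ι) = {a ∈ M(A) : ι(k)·a = a·ι(k) ∈ A for all k ∈ K}`
of a `K`-algebra `(A, ι)`. -/
def relComm {K A : Type*} [NonUnitalCStarAlgebra K] [NonUnitalCStarAlgebra A]
    (ι : K →⋆ₙₐ[ℂ] 𝓜(ℂ, A)) : Set 𝓜(ℂ, A) :=
  {a | ∀ k : K, ι k * a = a * ι k ∧ a * ι k ∈ Set.range ((↑) : A → 𝓜(ℂ, A))}

/-! ### Isomorphisms from relations -/

section Relation

/-- A bijective relation compatible with the ⋆-algebra operations is the graph of a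
⋆-isomorphism. -/
lemma exists_starAlgEquiv_of_rel {A B : Type*} [NonUnitalCStarAlgebra A]
    [NonUnitalCStarAlgebra B] (R : A → B → Prop)
    (h₁ : ∀ a, ∃ b, R a b) (u₁ : ∀ a b b', R a b → R a b' → b = b')
    (h₂ : ∀ b, ∃ a, R a b) (u₂ : ∀ a a' b, R a b → R a' b → a = a')
    (hadd : ∀ a b a' b', R a b → R a' b' → R (a + a') (b + b'))
    (hmul : ∀ a b a' b', R a b → R a' b' → R (a * a') (b * b'))
    (hsmul : ∀ (z : ℂ) a b, R a b → R (z • a) (z • b))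
    (hstar : ∀ a b, R a b → R (star a) (star b)) :
    ∃ φ : A ≃⋆ₐ[ℂ] B, ∀ a, R a (φ a) := by
  choose f hf using h₁
  choose g hg using h₂
  exact ⟨{ toFun := f
           invFun := g
           left_inv := fun a => u₂ _ _ _ (hg _) (hf a)
           right_inv := fun b => u₁ _ _ _ (hf _) (hg b)
           map_mul' := fun a b => u₁ _ _ _ (hf _) (hmul _ _ _ _ (hf a) (hf b))
           map_add' := fun a b => u₁ _ _ _ (hf _) (hadd _ _ _ _ (hf a) (hf b))
           map_star' := fun a => u₁ _ _ _ (hf _) (hstar _ _ (hf a))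
           map_smul' := fun z a => u₁ _ _ _ (hf _) (hsmul z _ _ (hf a)) }, hf⟩

end Relation

/-! ### Multipliers -/

section Multiplier

variable {A : Type*} [NonUnitalCStarAlgebra A]

lemma eq_of_forall_mul_eq {a b : A} (h : ∀ z, z * a = z * b) : a = b := by
  refine sub_eq_zero.1 ((CStarRing.star_mul_self_eq_zero_iff _).1 ?_)
  rw [mul_sub, h, sub_self]

lemma eq_of_forall_eq_mul {a b : A} (h : ∀ z, a * z = b * z) : a = b := by
  refine sub_eq_zero.1 ((CStarRing.mul_star_self_eq_zero_iff _).1 ?_)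
  rw [sub_mul, h, sub_self]

lemma fst_mul (c : 𝓜(ℂ, A)) (a x : A) : c.fst (a * x) = c.fst a * x :=
  eq_of_forall_mul_eq fun z => by rw [← c.central, ← mul_assoc, c.central, mul_assoc]

lemma mul_coe_eq (c : 𝓜(ℂ, A)) (a : A) : c * (a : 𝓜(ℂ, A)) = ((c.fst a : A) : 𝓜(ℂ, A)) := by
  refine DoubleCentralizer.ext _ _ _ _ (Prod.ext ?_ ?_)
  · ext x
    exact fst_mul c a x
  · ext x
    exact c.central x a

lemma snd_mul (c : 𝓜(ℂ, A)) (a x : A) : c.snd (x * a) = x * c.snd a :=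
  eq_of_forall_eq_mul fun z => by rw [c.central, mul_assoc, mul_assoc, c.central]

lemma coe_mul_eq (c : 𝓜(ℂ, A)) (a : A) : (a : 𝓜(ℂ, A)) * c = ((c.snd a : A) : 𝓜(ℂ, A)) := by
  refine DoubleCentralizer.ext _ _ _ _ (Prod.ext ?_ ?_)
  · ext x
    exact (c.central a x).symm
  · ext x
    exact snd_mul c a x

lemma coe_inj {a b : A} (h : (a : 𝓜(ℂ, A)) = (b : 𝓜(ℂ, A))) : a = b :=
  eq_of_forall_eq_mul fun z => congrArg (fun c : 𝓜(ℂ, A) => c.fst z) h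

lemma coe_isometry : Isometry (DoubleCentralizer.coe ℂ : A → 𝓜(ℂ, A)) :=
  NonUnitalStarAlgHom.isometry (DoubleCentralizer.coeHom (𝕜 := ℂ) (A := A)) fun _ _ h => coe_inj h

lemma isClosed_range_coe : IsClosed (Set.range (DoubleCentralizer.coe ℂ : A → 𝓜(ℂ, A))) :=
  coe_isometry.isClosedEmbedding.isClosed_range

lemma exists_tendsto_of_cauchySeq_coe {u : ℕ → A}
    (hu : CauchySeq fun n => (u n : 𝓜(ℂ, A))) :
    ∃ y, Filter.Tendsto u Filter.atTop (nhds y) := by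
  obtain ⟨z, hz⟩ := cauchySeq_tendsto_of_complete hu
  obtain ⟨y, rfl⟩ := isClosed_range_coe.mem_of_tendsto hz (.of_forall fun n => ⟨u n, rfl⟩)
  exact ⟨y, coe_isometry.isEmbedding.tendsto_nhds_iff.2 hz⟩

lemma fst_eq_of_forall {c d : 𝓜(ℂ, A)} (h : ∀ a, c.fst a = d.fst a) : c = d := by
  refine DoubleCentralizer.ext _ _ _ _ (Prod.ext ?_ ?_)
  · ext x
    exact h x
  · ext x
    exact eq_of_forall_eq_mul fun z => by rw [c.central, d.central, h]

/-- A multiplier is determined by its left action on `A`. -/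
lemma eq_of_forall_mul_coe {c d : 𝓜(ℂ, A)}
    (h : ∀ a : A, c * (a : 𝓜(ℂ, A)) = d * (a : 𝓜(ℂ, A))) : c = d :=
  fst_eq_of_forall fun a => coe_inj (by rw [← mul_coe_eq, ← mul_coe_eq, h])

/-- A sequence of multipliers whose left and right actions are Cauchy at each element of `A`
converges strictly.  Continuity of the limiting actions is the Banach–Steinhaus theorem. -/
lemma exists_strict_limit (T : ℕ → 𝓜(ℂ, A))
    (hl : ∀ a : A, CauchySeq fun n => T n * (a : 𝓜(ℂ, A)))
    (hr : ∀ a : A, CauchySeq fun n => (a : 𝓜(ℂ, A)) * T n) :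
    ∃ c : 𝓜(ℂ, A), ∀ a : A,
      Filter.Tendsto (fun n => T n * (a : 𝓜(ℂ, A))) Filter.atTop (nhds (c * (a : 𝓜(ℂ, A)))) := by
  have hl' : ∀ a : A, ∃ y, Filter.Tendsto (fun n => (T n).fst a) Filter.atTop (nhds y) := by
    intro a
    have := hl a
    simp only [mul_coe_eq] at this
    exact exists_tendsto_of_cauchySeq_coe this
  have hr' : ∀ a : A, ∃ y, Filter.Tendsto (fun n => (T n).snd a) Filter.atTop (nhds y) := by
    intro a
    have := hr a
    simp only [coe_mul_eq] at this
    exact exists_tendsto_of_cauchySeq_coe this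
  choose L hL using hl'
  choose R hR using hr'
  let L' : A →L[ℂ] A := continuousLinearMapOfTendsto (σ₁₂ := RingHom.id ℂ)
    (g := fun n => (T n).fst) (f := L) (tendsto_pi_nhds.2 hL)
  let R' : A →L[ℂ] A := continuousLinearMapOfTendsto (σ₁₂ := RingHom.id ℂ)
    (g := fun n => (T n).snd) (f := R) (tendsto_pi_nhds.2 hR)
  refine ⟨⟨(L', R'), fun x y => ?_⟩, fun a => ?_⟩
  · refine tendsto_nhds_unique ((hR x).mul_const y) ?_
    simp only [DoubleCentralizer.central]
    exact (hL y).const_mul x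
  · simp only [mul_coe_eq]
    exact (coe_isometry.continuous.tendsto _).comp (hL a)

/-- Conjugation of the two actions of a multiplier by an automorphism of `A`. -/
def conjMult (α : A ≃⋆ₐ[ℂ] A) (c : 𝓜(ℂ, A)) : 𝓜(ℂ, A) where
  fst :=
    { toFun := fun x => α (c.fst (α.symm x))
      map_add' := fun x y => by simp
      map_smul' := fun z x => by simp
      cont := (StarAlgEquiv.isometry α).continuous.comp (c.fst.continuous.comp (StarAlgEquiv.isometry α.symm).continuous) }
  snd :=
    { toFun := fun x => α (c.snd (α.symm x))
      map_add' := fun x y => by simp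
      map_smul' := fun z x => by simp
      cont := (StarAlgEquiv.isometry α).continuous.comp (c.snd.continuous.comp (StarAlgEquiv.isometry α.symm).continuous) }
  central x y := by
    have := congrArg α (c.central (α.symm x) (α.symm y))
    simpa using this

lemma conjMult_fst (α : A ≃⋆ₐ[ℂ] A) (c : 𝓜(ℂ, A)) (x : A) :
    (conjMult α c).fst x = α (c.fst (α.symm x)) := rfl

/-- The canonical extension of an automorphism of `A` to its multiplier algebra. -/
def extAut (α : A ≃⋆ₐ[ℂ] A) : 𝓜(ℂ, A) ≃⋆ₐ[ℂ] 𝓜(ℂ, A) where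
  toFun := conjMult α
  invFun := conjMult α.symm
  left_inv c := fst_eq_of_forall fun a => by simp [conjMult_fst]
  right_inv c := fst_eq_of_forall fun a => by simp [conjMult_fst]
  map_mul' c d := fst_eq_of_forall fun a => by simp [conjMult_fst]
  map_add' c d := fst_eq_of_forall fun a => by simp [conjMult_fst]
  map_smul' z c := fst_eq_of_forall fun a => by simp [conjMult_fst]
  map_star' c := fst_eq_of_forall fun a => by
    change α (star (c.snd (star (α.symm a)))) = star (α (c.snd (α.symm (star a))))
    simp [map_star]

lemma extAut_coe (α : A ≃⋆ₐ[ℂ] A) (a : A) :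
    extAut α (a : 𝓜(ℂ, A)) = ((α a : A) : 𝓜(ℂ, A)) :=
  fst_eq_of_forall fun x => by
    change α (a * α.symm x) = α a * x
    simp

end Multiplier

/-! ### Finite matrices over `B` -/

section MatrixSum

/-- `p` is a system of matrix units in `M`. -/
structure IsMatUnits {M : Type*} [CStarAlgebra M] (p : ℕ → ℕ → M) : Prop where
  mul : ∀ i j k l, p i j * p k l = if j = k then p i l else 0
  star : ∀ i j, star (p i j) = p j i

/-- The finite sum `∑ e(f i j) p i j` attached to a finitely supported matrix `f` over `B`. -/
def matSum {M B : Type*} [CStarAlgebra M] [NonUnitalCStarAlgebra B] (e : B →⋆ₙₐ[ℂ] M)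
    (p : ℕ → ℕ → M) : (ℕ × ℕ →₀ B) →ₗ[ℂ] M :=
  Finsupp.lsum ℂ fun x =>
    { toFun := fun b => e b * p x.1 x.2
      map_add' := fun a b => by rw [map_add, add_mul]
      map_smul' := fun z b => by rw [map_smul, smul_mul_assoc, RingHom.id_apply] }

variable {M B : Type*} [CStarAlgebra M] [NonUnitalCStarAlgebra B]

lemma matSum_single (e : B →⋆ₙₐ[ℂ] M) (p : ℕ → ℕ → M) (i j : ℕ) (b : B) :
    matSum e p (Finsupp.single (i, j) b) = e b * p i j := by
  simp [matSum]

variable {e : B →⋆ₙₐ[ℂ] M} {p : ℕ → ℕ → M}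

lemma mul_single_single (hp : IsMatUnits p) (hc : ∀ b i j, e b * p i j = p i j * e b)
    (i j k l : ℕ) (a b : B) :
    (e a * p i j) * (e b * p k l) = if j = k then e (a * b) * p i l else 0 := by
  rw [mul_assoc, ← mul_assoc (p i j), ← hc, mul_assoc (e b), hp.mul, map_mul]
  split_ifs <;> simp [mul_assoc]

lemma star_single (hp : IsMatUnits p) (hc : ∀ b i j, e b * p i j = p i j * e b)
    (i j : ℕ) (b : B) : star (e b * p i j) = e (star b) * p j i := by
  rw [star_mul, hp.star, hc, map_star]

/-- The ⋆-homomorphism `Mₙ(B) → M`, `m ↦ ∑ e(m i j) p i j`. -/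
def matHom [PartialOrder B] [StarOrderedRing B] (hp : IsMatUnits p)
    (hc : ∀ b i j, e b * p i j = p i j * e b) (n : ℕ) :
    CStarMatrix (Fin n) (Fin n) B →⋆ₙₐ[ℂ] M where
  toFun m := ∑ i, ∑ j, e (m i j) * p i j
  map_smul' z m := by
    simp [Finset.smul_sum]
  map_zero' := by simp
  map_add' a b := by simp [add_mul, Finset.sum_add_distrib]
  map_mul' a b := by
    rw [Finset.sum_mul]
    refine Finset.sum_congr rfl fun i _ => ?_
    simp only [CStarMatrix.mul_apply, map_sum]
    rw [Finset.sum_mul]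
    simp only [Finset.sum_mul]
    rw [Finset.sum_comm]
    refine Finset.sum_congr rfl fun k _ => ?_
    symm
    rw [Finset.mul_sum, Finset.sum_eq_single k]
    · rw [Finset.mul_sum]
      refine Finset.sum_congr rfl fun j _ => ?_
      rw [mul_single_single hp hc, if_pos rfl]
    · intro l _ hl
      rw [Finset.mul_sum]
      refine Finset.sum_eq_zero fun j _ => ?_
      rw [mul_single_single hp hc, if_neg (by simpa [Fin.val_inj] using hl.symm)]
    · simp
  map_star' a := by
    simp only [star_sum, star_single hp hc]
    rw [Finset.sum_comm]
    rfl

/-- Compressing by `p 0 k` and `p l 0` isolates the entry `e (m k l) * p 0 0`. -/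
lemma matHom_injective [PartialOrder B] [StarOrderedRing B] (hp : IsMatUnits p)
    (hc : ∀ b i j, e b * p i j = p i j * e b) (hf : ∀ b, e b * p 0 0 = 0 → b = 0) (n : ℕ) :
    Function.Injective (matHom hp hc n) := by
  refine (injective_iff_map_eq_zero _).2 fun m hm => ?_
  ext k l
  refine hf _ ?_
  have h : p 0 k * (∑ i, ∑ j, e (m i j) * p i j) * p l 0 = 0 := by
    have : (∑ i, ∑ j, e (m i j) * p i j) = 0 := hm
    rw [this, mul_zero, zero_mul]
  simp only [Finset.sum_mul, Finset.mul_sum] at h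
  rw [← h, Finset.sum_eq_single k, Finset.sum_eq_single l]
  · rw [← mul_assoc, ← hc, mul_assoc, mul_assoc, hp.mul, if_pos rfl, hp.mul, if_pos rfl]
  · intro j _ hj
    rw [mul_assoc, mul_assoc, hp.mul, if_neg (by simpa [Fin.val_inj] using hj)]
    simp
  · simp
  · intro i _ hi
    refine Finset.sum_eq_zero fun j _ => ?_
    rw [← mul_assoc, ← hc, mul_assoc (e _), hp.mul,
      if_neg (by simpa [Fin.val_inj] using hi.symm)]
    simp
  · simp

lemma matSum_eq_matHom [PartialOrder B] [StarOrderedRing B] (hp : IsMatUnits p)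
    (hc : ∀ b i j, e b * p i j = p i j * e b) {n : ℕ} {f : ℕ × ℕ →₀ B}
    (hn : f.support ⊆ Finset.range n ×ˢ Finset.range n) :
    matSum e p f = matHom hp hc n (CStarMatrix.ofMatrix fun i j => f (i, j)) := by
  have : matSum e p f = ∑ x ∈ Finset.range n ×ˢ Finset.range n, e (f x) * p x.1 x.2 := by
    rw [matSum, Finsupp.lsum_apply, Finsupp.sum_of_support_subset _ hn]
    · rfl
    · simp
  rw [this, Finset.sum_product, Finset.sum_range]
  refine Finset.sum_congr rfl fun i _ => ?_
  rw [Finset.sum_range]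
  rfl

/-- The norm of `∑ e(f i j) p i j` depends on `f` only, because an injective ⋆-homomorphism out
of the C⋆-algebra `Mₙ(B)` is isometric. -/
lemma norm_matSum_eq {e' : B →⋆ₙₐ[ℂ] M} {q : ℕ → ℕ → M}
    (hp : IsMatUnits p) (hc : ∀ b i j, e b * p i j = p i j * e b)
    (hf : ∀ b, e b * p 0 0 = 0 → b = 0)
    (hq : IsMatUnits q) (hc' : ∀ b i j, e' b * q i j = q i j * e' b)
    (hf' : ∀ b, e' b * q 0 0 = 0 → b = 0) (f : ℕ × ℕ →₀ B) :
    ‖matSum e p f‖ = ‖matSum e' q f‖ := by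
  let _ : PartialOrder B := CStarAlgebra.spectralOrder B
  have _ : StarOrderedRing B := CStarAlgebra.spectralOrderedRing B
  obtain ⟨n, hn⟩ : ∃ n, f.support ⊆ Finset.range n ×ˢ Finset.range n := by
    refine ⟨f.support.sup (fun x => x.1 + x.2 + 1), fun x hx => ?_⟩
    have := Finset.le_sup (f := fun x : ℕ × ℕ => x.1 + x.2 + 1) hx
    simp only [Finset.mem_product, Finset.mem_range]
    omega
  rw [matSum_eq_matHom hp hc hn, matSum_eq_matHom hq hc' hn,
    NonUnitalStarAlgHom.norm_map _ (matHom_injective hp hc hf n),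
    NonUnitalStarAlgHom.norm_map _ (matHom_injective hq hc' hf' n)]

/-- The matrix representing a product of finite sums can be chosen independently of `(e, p)`. -/
lemma matSum_mul (hp : IsMatUnits p) (hc : ∀ b i j, e b * p i j = p i j * e b)
    {e' : B →⋆ₙₐ[ℂ] M} {q : ℕ → ℕ → M}
    (hq : IsMatUnits q) (hc' : ∀ b i j, e' b * q i j = q i j * e' b) (f g : ℕ × ℕ →₀ B) :
    ∃ h, matSum e p h = matSum e p f * matSum e p g ∧
      matSum e' q h = matSum e' q f * matSum e' q g := by
  induction f using Finsupp.induction_linear with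
  | zero => exact ⟨0, by simp⟩
  | add f₁ f₂ h₁ h₂ =>
    obtain ⟨a, ha, ha'⟩ := h₁
    obtain ⟨b, hb, hb'⟩ := h₂
    exact ⟨a + b, by simp [add_mul, *], by simp [add_mul, *]⟩
  | single x a =>
    induction g using Finsupp.induction_linear with
    | zero => exact ⟨0, by simp⟩
    | add f₁ f₂ h₁ h₂ =>
      obtain ⟨c, hc₁, hc₂⟩ := h₁
      obtain ⟨d, hd₁, hd₂⟩ := h₂
      exact ⟨c + d, by simp [mul_add, *], by simp [mul_add, *]⟩
    | single y b =>
      obtain ⟨i, j⟩ := x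
      obtain ⟨k, l⟩ := y
      refine ⟨if j = k then Finsupp.single (i, l) (a * b) else 0, ?_⟩
      simp only [matSum_single, mul_single_single hp hc, mul_single_single hq hc']
      split_ifs <;> simp only [matSum_single, map_zero, and_self]

lemma matSum_star (hp : IsMatUnits p) (hc : ∀ b i j, e b * p i j = p i j * e b)
    {e' : B →⋆ₙₐ[ℂ] M} {q : ℕ → ℕ → M}
    (hq : IsMatUnits q) (hc' : ∀ b i j, e' b * q i j = q i j * e' b) (f : ℕ × ℕ →₀ B) :
    ∃ h, matSum e p h = star (matSum e p f) ∧ matSum e' q h = star (matSum e' q f) := by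
  induction f using Finsupp.induction_linear with
  | zero => exact ⟨0, by simp⟩
  | add f₁ f₂ h₁ h₂ =>
    obtain ⟨a, ha, ha'⟩ := h₁
    obtain ⟨b, hb, hb'⟩ := h₂
    exact ⟨a + b, by simp [*], by simp [*]⟩
  | single x a =>
    obtain ⟨i, j⟩ := x
    exact ⟨Finsupp.single (j, i) (star a), by
      simp only [matSum_single, star_single hp hc, star_single hq hc', and_self]⟩

lemma matSum_unit_mul (hp : IsMatUnits p) (hc : ∀ b i j, e b * p i j = p i j * e b)
    {e' : B →⋆ₙₐ[ℂ] M} {q : ℕ → ℕ → M}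
    (hq : IsMatUnits q) (hc' : ∀ b i j, e' b * q i j = q i j * e' b) (f : ℕ × ℕ →₀ B)
    (i j : ℕ) :
    ∃ h, matSum e p h = p i j * matSum e p f ∧ matSum e' q h = q i j * matSum e' q f := by
  induction f using Finsupp.induction_linear with
  | zero => exact ⟨0, by simp⟩
  | add f₁ f₂ h₁ h₂ =>
    obtain ⟨a, ha, ha'⟩ := h₁
    obtain ⟨b, hb, hb'⟩ := h₂
    exact ⟨a + b, by simp [mul_add, *], by simp [mul_add, *]⟩
  | single x a =>
    obtain ⟨k, l⟩ := x
    refine ⟨if j = k then Finsupp.single (i, l) a else 0, ?_⟩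
    rw [matSum_single, matSum_single, ← mul_assoc, ← hc, mul_assoc, hp.mul, ← mul_assoc, ← hc', mul_assoc, hq.mul]
    split_ifs <;> simp [matSum_single]

end MatrixSum

/-! ### Approximate units and ampliations -/

section Strict

/-- The projection `∑_{i < n} p i i`. -/
def unitSum {M : Type*} [CStarAlgebra M] (p : ℕ → ℕ → M) (n : ℕ) : M :=
  ∑ i ∈ Finset.range n, p i i

/-- The ampliation `∑_{i < n} p i 0 * a * p 0 i` of `a`, truncated at `n`. -/
def diagSum {M : Type*} [CStarAlgebra M] (p : ℕ → ℕ → M) (a : M) (n : ℕ) : M :=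
  ∑ i ∈ Finset.range n, p i 0 * a * p 0 i

variable {M : Type*} [CStarAlgebra M] {p : ℕ → ℕ → M}

lemma unitSum_mul_unit (hp : IsMatUnits p) (n i j : ℕ) :
    unitSum p n * p i j = if i < n then p i j else 0 := by
  simp [unitSum, Finset.sum_mul, hp.mul]

lemma unitSum_star (hp : IsMatUnits p) (n : ℕ) : star (unitSum p n) = unitSum p n := by
  simp [unitSum, hp.star]

lemma unitSum_norm_le (hp : IsMatUnits p) (n : ℕ) : ‖unitSum p n‖ ≤ 1 := by
  refine IsStarProjection.norm_le _ ⟨?_, unitSum_star hp n⟩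
  change unitSum p n * unitSum p n = _
  conv_lhs => rw [unitSum.eq_def p n, Finset.mul_sum]
  refine Finset.sum_congr rfl fun i hi => ?_
  rw [← unitSum, unitSum_mul_unit hp, if_pos (Finset.mem_range.1 hi)]

lemma diagSum_star (hp : IsMatUnits p) (a : M) (n : ℕ) :
    star (diagSum p a n) = diagSum p (star a) n := by
  simp [diagSum, hp.star, mul_assoc]

lemma diagSum_mul_unit (hp : IsMatUnits p) (a : M) (n i j : ℕ) :
    diagSum p a n * p i j = if i < n then p i 0 * a * p 0 j else 0 := by
  simp [diagSum, Finset.sum_mul, mul_assoc, hp.mul]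

lemma unit_mul_diagSum (hp : IsMatUnits p) (a : M) (n i j : ℕ) :
    p i j * diagSum p a n = if j < n then p i 0 * a * p 0 j else 0 := by
  simp [diagSum, Finset.mul_sum, ← mul_assoc, hp.mul]

lemma diagSum_mul_unitSum (hp : IsMatUnits p) (a : M) {m n : ℕ} (h : m ≤ n) :
    diagSum p a n * unitSum p m = diagSum p a m := by
  rw [unitSum, Finset.mul_sum]
  refine Finset.sum_congr rfl fun i hi => ?_
  rw [diagSum_mul_unit hp, if_pos ((Finset.mem_range.1 hi).trans_le h)]

/-- The truncated ampliations are uniformly bounded, because with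
`b = star a * p 0 0 * a` one has `star T * T = ∑ star (p 0 i) * b * p 0 i ≤ ‖b‖ • ∑ p i i`. -/
lemma diagSum_norm_le (hp : IsMatUnits p) (a : M) : ∃ C, ∀ n, ‖diagSum p a n‖ ≤ C := by
  let _ : PartialOrder M := CStarAlgebra.spectralOrder M
  have _ : StarOrderedRing M := CStarAlgebra.spectralOrderedRing M
  set b : M := star a * p 0 0 * a with hb
  have hsa : IsSelfAdjoint b := by
    simp [hb, IsSelfAdjoint, hp.star, mul_assoc]
  refine ⟨‖b‖ + 1, fun n => ?_⟩
  have h1 : star (diagSum p a n) * diagSum p a n =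
      ∑ i ∈ Finset.range n, star (p 0 i) * b * p 0 i := by
    conv_lhs => rw [diagSum_star hp, diagSum.eq_def p a n, Finset.mul_sum]
    refine Finset.sum_congr rfl fun i hi => ?_
    rw [← mul_assoc, ← mul_assoc, diagSum_mul_unit hp, if_pos (Finset.mem_range.1 hi), hp.star]
    simp [hb, mul_assoc]
  have h2 : star (diagSum p a n) * diagSum p a n ≤ ‖b‖ • unitSum p n := by
    rw [h1, unitSum, Finset.smul_sum]
    refine Finset.sum_le_sum fun i _ => ?_
    have := CStarAlgebra.star_left_conjugate_le_norm_smul (a := p 0 i) (b := b) hsa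
    rwa [hp.star 0 i, hp.mul, if_pos rfl, ← hp.star 0 i] at this
  have h3 := CStarAlgebra.norm_le_norm_of_nonneg_of_le (star_mul_self_nonneg _) h2
  rw [CStarRing.norm_star_mul_self, norm_smul, norm_norm] at h3
  have h4 := unitSum_norm_le hp n
  nlinarith [norm_nonneg b, norm_nonneg (diagSum p a n)]

open Filter Topology

/-- The elements on which the projections `unitSum p n` act as a left approximate unit form a
closed set. -/
lemma isClosed_unitSum (hp : IsMatUnits p) :
    IsClosed {y : M | Tendsto (fun n => unitSum p n * y) atTop (𝓝 y)} := by
  refine isClosed_of_closure_subset fun y hy => ?_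
  rw [Set.mem_ofPred_eq, Metric.tendsto_atTop]
  intro ε hε
  obtain ⟨z, hz, hyz⟩ := Metric.mem_closure_iff.1 hy (ε / 3) (by positivity)
  obtain ⟨N, hN⟩ := Metric.tendsto_atTop.1 hz (ε / 3) (by positivity)
  refine ⟨N, fun n hn => ?_⟩
  have h1 := hN n hn
  have h2 : dist (unitSum p n * y) (unitSum p n * z) ≤ dist y z := by
    rw [dist_eq_norm, dist_eq_norm, ← mul_sub]
    refine (norm_mul_le _ _).trans ?_
    nlinarith [unitSum_norm_le hp n, norm_nonneg (y - z)]
  have h3 := dist_triangle4 (unitSum p n * y) (unitSum p n * z) z y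
  rw [dist_comm z y] at h3
  linarith

variable {K A : Type*} [NonUnitalCStarAlgebra K] [NonUnitalCStarAlgebra A]

lemma MatrixUnits.isMatUnits (m : MatrixUnits K) (ι : K →⋆ₙₐ[ℂ] M) :
    IsMatUnits fun i j => ι (m.u i j) where
  mul i j k l := by rw [← map_mul, m.u_mul]; split_ifs <;> simp
  star i j := by rw [← map_star, m.star_u]

/-- A closed condition on `K` that is linear holds everywhere once it holds at matrix units. -/
lemma MatrixUnits.induction (m : MatrixUnits K) {S : Set K} (hS : IsClosed S)
    (h0 : (0 : K) ∈ S) (hadd : ∀ x y, x ∈ S → y ∈ S → x + y ∈ S)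
    (hsmul : ∀ (z : ℂ) x, x ∈ S → z • x ∈ S) (hu : ∀ i j, m.u i j ∈ S) (k : K) : k ∈ S := by
  have hle : (Submodule.span ℂ (Set.range fun q : ℕ × ℕ => m.u q.1 q.2) : Set K) ⊆ S := by
    let T : Submodule ℂ K :=
      { carrier := S
        zero_mem' := h0
        add_mem' := fun {x y} => hadd x y
        smul_mem' := hsmul }
    refine (Submodule.span_le (p := T)).2 ?_
    rintro _ ⟨q, rfl⟩
    exact hu _ _
  exact closure_minimal hle hS (m.dense_span k)

lemma starHom_continuous (ι : K →⋆ₙₐ[ℂ] M) : Continuous ι :=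
  AddMonoidHomClass.continuous_of_bound ι 1 fun x => by
    rw [one_mul]; exact NonUnitalStarAlgHom.norm_apply_le ι x

/-- Nondegeneracy of `ι` makes the projections `∑_{i < n} ι(u i i)` a left approximate unit
for `A`. -/
lemma tendsto_unitSum_of_nondegenerate (m : MatrixUnits K) (ι : K →⋆ₙₐ[ℂ] 𝓜(ℂ, A))
    (hι : Nondegenerate ι) (a : A) :
    Tendsto (fun n => unitSum (fun i j => ι (m.u i j)) n * (a : 𝓜(ℂ, A))) atTop
      (𝓝 (a : 𝓜(ℂ, A))) := by
  set p : ℕ → ℕ → 𝓜(ℂ, A) := fun i j => ι (m.u i j) with hpdef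
  have hp : IsMatUnits p := m.isMatUnits ι
  let S : Submodule ℂ 𝓜(ℂ, A) :=
    { carrier := {y | Tendsto (fun n => unitSum p n * y) atTop (𝓝 y)}
      zero_mem' := by simp
      add_mem' := fun {x y} hx hy => by
        simp only [Set.mem_ofPred_eq, mul_add] at *
        exact hx.add hy
      smul_mem' := fun z x hx => by
        simp only [Set.mem_ofPred_eq, mul_smul_comm] at *
        exact hx.const_smul z }
  have hS : IsClosed (S : Set 𝓜(ℂ, A)) := isClosed_unitSum hp
  have hk : ∀ k : K, ι k ∈ S := by
    refine m.induction (S := ι ⁻¹' S) (hS.preimage (starHom_continuous ι)) ?_ ?_ ?_ ?_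
    · simp
    · intro x y hx hy
      simpa using S.add_mem hx hy
    · intro z x hx
      simpa using S.smul_mem z hx
    · intro i j
      change Tendsto (fun n => unitSum p n * p i j) atTop (𝓝 (p i j))
      refine tendsto_const_nhds.congr' ?_
      filter_upwards [eventually_gt_atTop i] with n hn
      rw [unitSum_mul_unit hp, if_pos hn]
  refine closure_minimal (Submodule.span_le (p := S) |>.2 ?_) hS (hι a)
  rintro _ ⟨k, c, rfl⟩
  change Tendsto (fun n => unitSum p n * (ι k * c)) atTop (𝓝 (ι k * c))
  simp only [← mul_assoc]
  exact (hk k : Tendsto (fun n => unitSum p n * ι k) atTop (𝓝 (ι k))).mul_const _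

/-- Every `a ∈ M(A)` has an ampliation `∑ᵢ p i 0 * a * p 0 i`, as a strictly convergent series in the
multiplier algebra. -/
lemma exists_ampliation {p : ℕ → ℕ → 𝓜(ℂ, A)} (hp : IsMatUnits p)
    (hlim : ∀ a : A, Tendsto (fun n => unitSum p n * (a : 𝓜(ℂ, A))) atTop (𝓝 (a : 𝓜(ℂ, A))))
    (a : 𝓜(ℂ, A)) :
    ∃ c : 𝓜(ℂ, A), ∀ i j, c * p i j = p i 0 * a * p 0 j ∧ p i j * c = p i 0 * a * p 0 j := by
  have hcau : ∀ (a : 𝓜(ℂ, A)) (x : A),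
      CauchySeq fun n => diagSum p a n * (x : 𝓜(ℂ, A)) := by
    intro a x
    obtain ⟨C, hC⟩ := diagSum_norm_le hp a
    refine cauchySeq_of_le_tendsto_0'
      (fun n => C * dist (x : 𝓜(ℂ, A)) (unitSum p n * (x : 𝓜(ℂ, A)))) ?_ ?_
    · intro m n hmn
      rw [← diagSum_mul_unitSum hp a hmn, dist_comm, dist_eq_norm, dist_eq_norm, mul_assoc,
        ← mul_sub]
      exact (norm_mul_le _ _).trans (mul_le_mul_of_nonneg_right (hC n) (norm_nonneg _))
    · simpa using ((tendsto_const_nhds (x := (x : 𝓜(ℂ, A)))).dist (hlim x)).const_mul C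
  -- The right actions are the adjoints of the left actions of the ampliation of `star a`.
  have hcau' : ∀ x : A, CauchySeq fun n => (x : 𝓜(ℂ, A)) * diagSum p a n := by
    intro x
    have h1 := hcau (star a) (star x)
    have h2 : UniformContinuous (star : 𝓜(ℂ, A) → 𝓜(ℂ, A)) :=
      (starₗᵢ ℂ : 𝓜(ℂ, A) ≃ₗᵢ⋆[ℂ] 𝓜(ℂ, A)).isometry.uniformContinuous
    have h3 := h2.comp_cauchySeq h1
    have h4 : star ((star x : A) : 𝓜(ℂ, A)) = (x : 𝓜(ℂ, A)) := by
      have := map_star (DoubleCentralizer.coeHom (𝕜 := ℂ) (A := A)) (star x)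
      rw [star_star] at this
      exact this.symm
    simpa [Function.comp_def, diagSum_star hp, h4] using h3
  obtain ⟨c, hc⟩ := exists_strict_limit _ (hcau a) hcau'
  refine ⟨c, fun i j => ⟨eq_of_forall_mul_coe fun x => ?_, eq_of_forall_mul_coe fun x => ?_⟩⟩
  · rw [mul_assoc, mul_coe_eq (p i j)]
    refine tendsto_nhds_unique (hc _) (tendsto_const_nhds.congr' ?_)
    filter_upwards [eventually_gt_atTop i] with n hn
    rw [← mul_coe_eq, ← mul_assoc, diagSum_mul_unit hp, if_pos hn]
  · rw [mul_assoc]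
    refine tendsto_nhds_unique ((hc x).const_mul (p i j)) (tendsto_const_nhds.congr' ?_)
    filter_upwards [eventually_gt_atTop j] with n hn
    rw [← mul_assoc, unit_mul_diagSum hp, if_pos hn]

end Strict

/-! ### Closures of norm-preserving correspondences -/

section Graph

open Filter Topology

variable {F M : Type*} [AddCommGroup F] [Module ℂ F] [CStarAlgebra M]

/-- `(x, y)` is a limit of pairs `(Φ₁ f, Φ₂ f)`: the closure of the correspondence
`Φ₁ f ↦ Φ₂ f`. -/
def GraphRel (Φ₁ Φ₂ : F →ₗ[ℂ] M) (x y : M) : Prop :=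
  ∃ f : ℕ → F, Tendsto (fun n => Φ₁ (f n)) atTop (𝓝 x) ∧ Tendsto (fun n => Φ₂ (f n)) atTop (𝓝 y)

variable {Φ₁ Φ₂ : F →ₗ[ℂ] M}

lemma GraphRel.symm {x y : M} (h : GraphRel Φ₁ Φ₂ x y) : GraphRel Φ₂ Φ₁ y x :=
  let ⟨f, h₁, h₂⟩ := h
  ⟨f, h₂, h₁⟩

lemma GraphRel.add {x y x' y' : M} (h : GraphRel Φ₁ Φ₂ x y) (h' : GraphRel Φ₁ Φ₂ x' y') :
    GraphRel Φ₁ Φ₂ (x + x') (y + y') := by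
  obtain ⟨f, h₁, h₂⟩ := h
  obtain ⟨g, h₃, h₄⟩ := h'
  exact ⟨f + g, by simpa using h₁.add h₃, by simpa using h₂.add h₄⟩

lemma GraphRel.smul {x y : M} (z : ℂ) (h : GraphRel Φ₁ Φ₂ x y) :
    GraphRel Φ₁ Φ₂ (z • x) (z • y) := by
  obtain ⟨f, h₁, h₂⟩ := h
  exact ⟨z • f, by simpa using h₁.const_smul z, by simpa using h₂.const_smul z⟩

lemma GraphRel.mul {x y x' y' : M} (h : GraphRel Φ₁ Φ₂ x y) (h' : GraphRel Φ₁ Φ₂ x' y')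
    (hm : ∀ f g, ∃ k, Φ₁ k = Φ₁ f * Φ₁ g ∧ Φ₂ k = Φ₂ f * Φ₂ g) :
    GraphRel Φ₁ Φ₂ (x * x') (y * y') := by
  obtain ⟨f, h₁, h₂⟩ := h
  obtain ⟨g, h₃, h₄⟩ := h'
  choose k hk hk' using hm
  exact ⟨fun n => k (f n) (g n), by simpa [hk] using h₁.mul h₃, by simpa [hk'] using h₂.mul h₄⟩

lemma GraphRel.star {x y : M} (h : GraphRel Φ₁ Φ₂ x y)
    (hm : ∀ f, ∃ k, Φ₁ k = star (Φ₁ f) ∧ Φ₂ k = star (Φ₂ f)) :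
    GraphRel Φ₁ Φ₂ (star x) (star y) := by
  obtain ⟨f, h₁, h₂⟩ := h
  choose k hk hk' using hm
  exact ⟨fun n => k (f n), by simpa [hk] using h₁.star, by simpa [hk'] using h₂.star⟩

lemma GraphRel.const_mul {x y : M} (h : GraphRel Φ₁ Φ₂ x y) (s t : M)
    (hm : ∀ f, ∃ k, Φ₁ k = s * Φ₁ f ∧ Φ₂ k = t * Φ₂ f) :
    GraphRel Φ₁ Φ₂ (s * x) (t * y) := by
  obtain ⟨f, h₁, h₂⟩ := h
  choose k hk hk' using hm
  exact ⟨fun n => k (f n), by simpa [hk] using h₁.const_mul s, by simpa [hk'] using h₂.const_mul t⟩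

/-- Equality of norms makes the closed correspondence single-valued. -/
lemma GraphRel.unique (hn : ∀ f, ‖Φ₁ f‖ = ‖Φ₂ f‖) {x y y' : M} (h : GraphRel Φ₁ Φ₂ x y)
    (h' : GraphRel Φ₁ Φ₂ x y') : y = y' := by
  obtain ⟨f, h₁, h₂⟩ := h
  obtain ⟨g, h₃, h₄⟩ := h'
  have h5 := (h₁.sub h₃).norm
  have h6 := (h₂.sub h₄).norm
  simp only [← map_sub, ← hn] at h5 h6
  have := tendsto_nhds_unique h6 h5
  rwa [sub_self, norm_zero, norm_eq_zero, sub_eq_zero] at this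

/-- Equality of norms turns a sequence `Φ₁ (f n)` converging to `x` into a Cauchy sequence
`Φ₂ (f n)`. -/
lemma GraphRel.total (hn : ∀ f, ‖Φ₁ f‖ = ‖Φ₂ f‖) {x : M} (hx : x ∈ closure (Set.range Φ₁)) :
    ∃ y, GraphRel Φ₁ Φ₂ x y := by
  obtain ⟨u, hu, hux⟩ := mem_closure_iff_seq_limit.1 hx
  choose f hf using hu
  have hux' : Tendsto (fun n => Φ₁ (f n)) atTop (𝓝 x) := by simpa [hf] using hux
  have hc : CauchySeq fun n => Φ₂ (f n) := by
    have := hux'.cauchySeq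
    rw [Metric.cauchySeq_iff] at this ⊢
    simpa only [dist_eq_norm, ← map_sub, hn] using this
  obtain ⟨y, hy⟩ := cauchySeq_tendsto_of_complete hc
  exact ⟨y, f, hux', hy⟩

end Graph

/-! ### Relative commutants and the automorphism -/

section RelComm

open Filter Topology

variable {K A B : Type*} [NonUnitalCStarAlgebra K] [NonUnitalCStarAlgebra A]
  [NonUnitalCStarAlgebra B]

lemma relComm_commute {m : MatrixUnits K} {ι : K →⋆ₙₐ[ℂ] 𝓜(ℂ, A)} {e : B →⋆ₙₐ[ℂ] 𝓜(ℂ, A)}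
    (he : Set.range e = relComm ι) (b : B) (i j : ℕ) :
    e b * ι (m.u i j) = ι (m.u i j) * e b := by
  have h : e b ∈ relComm ι := he ▸ Set.mem_range_self b
  exact (h _).1.symm

/-- If `c ∈ C(A, ι)` vanishes on one diagonal matrix unit, it annihilates `ι(K)A`, hence is `0`. -/
lemma relComm_faithful {m : MatrixUnits K} {ι : K →⋆ₙₐ[ℂ] 𝓜(ℂ, A)} (hι : Nondegenerate ι)
    {e : B →⋆ₙₐ[ℂ] 𝓜(ℂ, A)} (he : Set.range e = relComm ι) (hinj : Function.Injective e)
    (b : B) (hb : e b * ι (m.u 0 0) = 0) : b = 0 := by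
  have hp := m.isMatUnits ι
  have hij : ∀ i j, e b * ι (m.u i j) = 0 := by
    intro i j
    have h1 : ι (m.u i j) = ι (m.u i 0) * ι (m.u 0 0) * ι (m.u 0 j) := by
      simp only [hp.mul i 0 0 0, hp.mul i 0 0 j, if_true]
    rw [h1, ← mul_assoc, ← mul_assoc, relComm_commute he, mul_assoc (ι _), hb, mul_zero, zero_mul]
  refine hinj ((eq_of_forall_mul_coe fun a => ?_ : e b = 0).trans (map_zero e).symm)
  rw [zero_mul]
  refine tendsto_nhds_unique
    ((tendsto_unitSum_of_nondegenerate m ι hι a).const_mul (e b)) ?_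
  simp [unitSum, ← mul_assoc, Finset.mul_sum, hij]

/-- The ampliation of `a ∈ A` lies in `C(A, ι)`, so every `ι(u i 0) * a * ι(u 0 j)` has the form
`c * ι(u i j)` with one `c ∈ C(A, ι)`. -/
lemma relComm_exists {m : MatrixUnits K} {ι : K →⋆ₙₐ[ℂ] 𝓜(ℂ, A)} (hι : Nondegenerate ι)
    {e : B →⋆ₙₐ[ℂ] 𝓜(ℂ, A)} (he : Set.range e = relComm ι) (a : A) :
    ∃ b, ∀ i j, e b * ι (m.u i j) = ι (m.u i 0) * (a : 𝓜(ℂ, A)) * ι (m.u 0 j) := by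
  obtain ⟨c, hc⟩ := exists_ampliation (m.isMatUnits ι)
    (tendsto_unitSum_of_nondegenerate m ι hι) (a : 𝓜(ℂ, A))
  have hcont := starHom_continuous ι
  have hmem : c ∈ relComm ι := by
    intro k
    constructor
    · refine m.induction (S := {k | ι k * c = c * ι k})
        (isClosed_eq (hcont.mul_const c) (hcont.const_mul c)) ?_ ?_ ?_ ?_ k
      · simp
      · intro x y hx hy
        simp only [Set.mem_ofPred_eq, map_add, mul_add, add_mul] at *
        rw [hx, hy]
      · intro z x hx
        simp only [Set.mem_ofPred_eq, map_smul, mul_smul_comm, smul_mul_assoc] at *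
        rw [hx]
      · intro i j
        exact (hc i j).2.trans (hc i j).1.symm
    · refine m.induction (S := {k | c * ι k ∈ Set.range (DoubleCentralizer.coe ℂ)})
        (isClosed_range_coe.preimage (hcont.const_mul c)) ?_ ?_ ?_ ?_ k
      · exact ⟨0, by simpa using map_zero (DoubleCentralizer.coeHom (𝕜 := ℂ) (A := A))⟩
      · rintro x y ⟨s, hs⟩ ⟨t, ht⟩
        refine ⟨s + t, ?_⟩
        rw [map_add, mul_add, ← hs, ← ht]
        exact map_add (DoubleCentralizer.coeHom (𝕜 := ℂ) (A := A)) s t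
      · rintro z x ⟨s, hs⟩
        refine ⟨z • s, ?_⟩
        rw [map_smul, mul_smul_comm, ← hs]
        exact map_smul (DoubleCentralizer.coeHom (𝕜 := ℂ) (A := A)) z s
      · intro i j
        refine ⟨(ι (m.u 0 j)).snd ((ι (m.u i 0)).fst a), ?_⟩
        rw [← coe_mul_eq, ← mul_coe_eq]
        exact (hc i j).1.symm
  rw [← he] at hmem
  obtain ⟨b, rfl⟩ := hmem
  exact ⟨b, fun i j => (hc i j).1⟩

/-- The finite matrix sums over `C(A, ι)` lie in `A`, as `C(A, ι) ι(K) ⊆ A`. -/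
lemma matSum_mem_range {m : MatrixUnits K} {ι : K →⋆ₙₐ[ℂ] 𝓜(ℂ, A)}
    {e : B →⋆ₙₐ[ℂ] 𝓜(ℂ, A)} (he : Set.range e = relComm ι) (f : ℕ × ℕ →₀ B) :
    matSum e (fun i j => ι (m.u i j)) f ∈ Set.range (DoubleCentralizer.coe ℂ) := by
  induction f using Finsupp.induction_linear with
  | zero => exact ⟨0, by simpa using map_zero (DoubleCentralizer.coeHom (𝕜 := ℂ) (A := A))⟩
  | add f g hf hg =>
    obtain ⟨s, hs⟩ := hf
    obtain ⟨t, ht⟩ := hg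
    refine ⟨s + t, ?_⟩
    rw [map_add, ← hs, ← ht]
    exact map_add (DoubleCentralizer.coeHom (𝕜 := ℂ) (A := A)) s t
  | single x b =>
    obtain ⟨i, j⟩ := x
    have h : e b ∈ relComm ι := he ▸ Set.mem_range_self b
    rw [matSum_single]
    exact (h _).2

/-- The finite sums `∑ c i j * ι(u i j)` with `c i j ∈ C(A, ι)` are dense in `A`:
`a` is the limit of its compressions by the projections `∑_{i < n} ι(u i i)`. -/
lemma coe_mem_closure_matSum {m : MatrixUnits K} {ι : K →⋆ₙₐ[ℂ] 𝓜(ℂ, A)}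
    (hι : Nondegenerate ι) {e : B →⋆ₙₐ[ℂ] 𝓜(ℂ, A)} (he : Set.range e = relComm ι) (a : A) :
    (a : 𝓜(ℂ, A)) ∈ closure (Set.range (matSum e fun i j => ι (m.u i j))) := by
  set p : ℕ → ℕ → 𝓜(ℂ, A) := fun i j => ι (m.u i j) with hpdef
  have hp : IsMatUnits p := m.isMatUnits ι
  have hl := tendsto_unitSum_of_nondegenerate m ι hι
  have hr : Tendsto (fun n => (a : 𝓜(ℂ, A)) * unitSum p n) atTop (𝓝 (a : 𝓜(ℂ, A))) := by
    have h4 : star ((star a : A) : 𝓜(ℂ, A)) = (a : 𝓜(ℂ, A)) := by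
      have := map_star (DoubleCentralizer.coeHom (𝕜 := ℂ) (A := A)) (star a)
      rw [star_star] at this
      exact this.symm
    have := (hl (star a)).star
    simp only [star_mul, h4] at this
    simpa only [← hpdef, unitSum_star hp] using this
  have hlim : Tendsto (fun n => unitSum p n * ((a : 𝓜(ℂ, A)) * unitSum p n)) atTop
      (𝓝 (a : 𝓜(ℂ, A))) := by
    have h1 : Tendsto (fun n => unitSum p n * ((a : 𝓜(ℂ, A)) * unitSum p n - (a : 𝓜(ℂ, A))))
        atTop (𝓝 0) := by
      refine squeeze_zero_norm (fun n => ?_) (tendsto_iff_norm_sub_tendsto_zero.1 hr)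
      refine (norm_mul_le _ _).trans ?_
      exact mul_le_of_le_one_left (norm_nonneg _) (unitSum_norm_le hp n)
    have h2 := h1.add (hl a)
    simpa [mul_sub, ← hpdef] using h2
  refine mem_closure_of_tendsto hlim (.of_forall fun n => ?_)
  -- The `(i, j)` entry `p i i * a * p j j` is `p i 0 * a' * p 0 j` for `a' = p 0 i * a * p j 0`.
  have hb : ∀ i j, ∃ b, e b * p i j = p i i * ((a : 𝓜(ℂ, A)) * p j j) := by
    intro i j
    obtain ⟨b, hb⟩ := relComm_exists (m := m) hι he ((p j 0).snd ((p 0 i).fst a))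
    refine ⟨b, (hb i j).trans ?_⟩
    rw [← coe_mul_eq, ← mul_coe_eq]
    change p i 0 * (p 0 i * (a : 𝓜(ℂ, A)) * p j 0) * p 0 j = _
    have h1 : p i i = p i 0 * p 0 i := by simp [hp.mul]
    have h2 : p j j = p j 0 * p 0 j := by simp [hp.mul]
    rw [h1, h2]
    simp only [mul_assoc]
  choose b hb using hb
  refine ⟨∑ i ∈ Finset.range n, ∑ j ∈ Finset.range n, Finsupp.single (i, j) (b i j), ?_⟩
  simp only [map_sum, matSum_single, hb]
  rw [unitSum, Finset.sum_mul]
  simp only [Finset.mul_sum]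

/-- Two nondegenerate homomorphisms whose relative commutants are both faithful images of `B`
differ by an automorphism of `A`, namely `e₁ b * ι₁(u i j) ↦ e₂ b * ι₂(u i j)`. -/
lemma exists_aut {m : MatrixUnits K} {ι₁ ι₂ : K →⋆ₙₐ[ℂ] 𝓜(ℂ, A)}
    (hι₁ : Nondegenerate ι₁) (hι₂ : Nondegenerate ι₂) {e₁ e₂ : B →⋆ₙₐ[ℂ] 𝓜(ℂ, A)}
    (he₁ : Function.Injective e₁) (he₁r : Set.range e₁ = relComm ι₁)
    (he₂ : Function.Injective e₂) (he₂r : Set.range e₂ = relComm ι₂) :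
    ∃ α : A ≃⋆ₐ[ℂ] A, ∀ k, extAut α (ι₁ k) = ι₂ k := by
  set p : ℕ → ℕ → 𝓜(ℂ, A) := fun i j => ι₁ (m.u i j) with hpdef
  set q : ℕ → ℕ → 𝓜(ℂ, A) := fun i j => ι₂ (m.u i j) with hqdef
  have hp : IsMatUnits p := m.isMatUnits ι₁
  have hq : IsMatUnits q := m.isMatUnits ι₂
  have hc₁ : ∀ b i j, e₁ b * p i j = p i j * e₁ b := relComm_commute he₁r
  have hc₂ : ∀ b i j, e₂ b * q i j = q i j * e₂ b := relComm_commute he₂r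
  have hn : ∀ f, ‖matSum e₁ p f‖ = ‖matSum e₂ q f‖ := fun f =>
    norm_matSum_eq hp hc₁ (relComm_faithful (m := m) hι₁ he₁r he₁) hq hc₂
      (relComm_faithful (m := m) hι₂ he₂r he₂) f
  have total₁ : ∀ a : A, ∃ b : A, GraphRel (matSum e₁ p) (matSum e₂ q) a b := by
    intro a
    obtain ⟨y, hy⟩ := GraphRel.total hn (coe_mem_closure_matSum (m := m) hι₁ he₁r a)
    obtain ⟨f, -, hf⟩ := id hy
    obtain ⟨b, rfl⟩ := isClosed_range_coe.mem_of_tendsto hf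
      (.of_forall fun n => matSum_mem_range (m := m) he₂r (f n))
    exact ⟨b, hy⟩
  have total₂ : ∀ b : A, ∃ a : A, GraphRel (matSum e₁ p) (matSum e₂ q) a b := by
    intro a
    obtain ⟨y, hy⟩ := GraphRel.total (fun f => (hn f).symm)
      (coe_mem_closure_matSum (m := m) hι₂ he₂r a)
    obtain ⟨f, -, hf⟩ := id hy
    obtain ⟨b, rfl⟩ := isClosed_range_coe.mem_of_tendsto hf
      (.of_forall fun n => matSum_mem_range (m := m) he₁r (f n))
    exact ⟨b, hy.symm⟩
  obtain ⟨α, hα⟩ := exists_starAlgEquiv_of_rel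
    (fun a b : A => GraphRel (matSum e₁ p) (matSum e₂ q) (a : 𝓜(ℂ, A)) (b : 𝓜(ℂ, A)))
    total₁ (fun a b b' h h' => coe_inj (h.unique hn h'))
    total₂ (fun a a' b h h' => coe_inj (h.symm.unique (fun f => (hn f).symm) h'.symm))
    (fun a b a' b' h h' => by
      have := h.add h'
      rwa [← DoubleCentralizer.coeHom_apply, ← DoubleCentralizer.coeHom_apply,
        ← DoubleCentralizer.coeHom_apply, ← DoubleCentralizer.coeHom_apply, ← map_add,
        ← map_add] at this)
    (fun a b a' b' h h' => by
      have := h.mul h' (matSum_mul hp hc₁ hq hc₂)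
      rwa [← DoubleCentralizer.coeHom_apply, ← DoubleCentralizer.coeHom_apply,
        ← DoubleCentralizer.coeHom_apply, ← DoubleCentralizer.coeHom_apply, ← map_mul,
        ← map_mul] at this)
    (fun z a b h => by
      have := h.smul z
      rwa [← DoubleCentralizer.coeHom_apply, ← DoubleCentralizer.coeHom_apply, ← map_smul,
        ← map_smul] at this)
    (fun a b h => by
      have := h.star (matSum_star hp hc₁ hq hc₂)
      rwa [← DoubleCentralizer.coeHom_apply, ← DoubleCentralizer.coeHom_apply, ← map_star,
        ← map_star] at this)
  -- Left multiplication by `(p i j, q i j)` preserves the correspondence, which transports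
  -- the action of `p i j` on `A` to that of `q i j`.
  have hunit : ∀ i j, extAut α (p i j) = q i j := by
    intro i j
    refine eq_of_forall_mul_coe fun y => ?_
    obtain ⟨x, rfl⟩ : ∃ x, α x = y := α.surjective y
    rw [← extAut_coe, ← map_mul, mul_coe_eq, extAut_coe, extAut_coe]
    refine (hα ((p i j).fst x)).unique hn ?_
    rw [← mul_coe_eq]
    exact (hα x).const_mul _ _ fun f => matSum_unit_mul hp hc₁ hq hc₂ f i j
  refine ⟨α, m.induction (S := {k | extAut α (ι₁ k) = ι₂ k}) (isClosed_eq
    ((StarAlgEquiv.isometry (extAut α)).continuous.comp (starHom_continuous ι₁))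
    (starHom_continuous ι₂)) ?_ ?_ ?_ hunit⟩
  · simp
  · intro x y hx hy
    simp only [Set.mem_ofPred_eq, map_add] at *
    rw [hx, hy]
  · intro z x hx
    simp only [Set.mem_ofPred_eq, map_smul] at *
    rw [hx]

/-- An automorphism of `A` intertwining `ι₁` and `ι₂` maps `C(A, ι₁)` into `C(A, ι₂)`. -/
lemma map_mem_relComm {ι₁ ι₂ : K →⋆ₙₐ[ℂ] 𝓜(ℂ, A)} {α : A → A}
    {ᾱ : 𝓜(ℂ, A) ≃⋆ₐ[ℂ] 𝓜(ℂ, A)}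
    (h : ∀ a : A, ᾱ (a : 𝓜(ℂ, A)) = ((α a : A) : 𝓜(ℂ, A))) (hk : ∀ k, ᾱ (ι₁ k) = ι₂ k)
    {c : 𝓜(ℂ, A)} (hc : c ∈ relComm ι₁) : ᾱ c ∈ relComm ι₂ := by
  intro k
  obtain ⟨h1, a, ha⟩ := hc k
  rw [← hk, ← map_mul, ← map_mul, h1]
  exact ⟨rfl, α a, by rw [← h, ← ha]⟩

end RelComm


/-- For `j = 1, 2` let `ι_j : 𝒦 → M(A)` be a nondegenerate homomorphism
and let `B_j` be a C⋆-algebra isomorphic to the relative commutant `C(A, ι_j)` (which is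
expressed by an injective homomorphism `e_j : B_j → M(A)` with range `C(A, ι_j)`).  Then
`B₁ ≅ B₂` if and only if there is an automorphism `α` of `A` whose canonical extension
`ᾱ` to `M(A)` satisfies `ᾱ ∘ ι₁ = ι₂`. -/
theorem relComm_iso_iff_exists_automorphism
    {K A B₁ B₂ : Type*} [NonUnitalCStarAlgebra K] [NonUnitalCStarAlgebra A]
    [NonUnitalCStarAlgebra B₁] [NonUnitalCStarAlgebra B₂]
    (hK : IsCompactOperatorsAlgebra K)
    (ι₁ ι₂ : K →⋆ₙₐ[ℂ] 𝓜(ℂ, A)) (hι₁ : Nondegenerate ι₁) (hι₂ : Nondegenerate ι₂)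
    (e₁ : B₁ →⋆ₙₐ[ℂ] 𝓜(ℂ, A)) (he₁ : Function.Injective e₁)
    (he₁r : Set.range e₁ = relComm ι₁)
    (e₂ : B₂ →⋆ₙₐ[ℂ] 𝓜(ℂ, A)) (he₂ : Function.Injective e₂)
    (he₂r : Set.range e₂ = relComm ι₂) :
    Nonempty (B₁ ≃⋆ₐ[ℂ] B₂) ↔
      ∃ (α : A ≃⋆ₐ[ℂ] A) (ᾱ : 𝓜(ℂ, A) ≃⋆ₐ[ℂ] 𝓜(ℂ, A)),
        (∀ a : A, ᾱ (a : 𝓜(ℂ, A)) = ((α a : A) : 𝓜(ℂ, A))) ∧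
          ∀ k : K, ᾱ (ι₁ k) = ι₂ k := by
  obtain ⟨m⟩ := hK
  constructor
  · rintro ⟨θ⟩
    let e₃ : B₁ →⋆ₙₐ[ℂ] 𝓜(ℂ, A) := e₂.comp (θ : B₁ →⋆ₙₐ[ℂ] B₂)
    have he₃ : Function.Injective e₃ := he₂.comp θ.injective
    have he₃r : Set.range e₃ = relComm ι₂ := by
      rw [← he₂r]
      exact θ.surjective.range_comp e₂
    obtain ⟨α, hα⟩ := exists_aut (m := m) hι₁ hι₂ he₁ he₁r he₃ he₃r
    exact ⟨α, extAut α, extAut_coe α, hα⟩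
  · rintro ⟨α, ᾱ, hα, hk⟩
    have hα' : ∀ a : A, ᾱ.symm (a : 𝓜(ℂ, A)) = ((α.symm a : A) : 𝓜(ℂ, A)) := fun a => by
      rw [StarAlgEquiv.symm_apply_eq, hα, StarAlgEquiv.apply_symm_apply]
    have hk' : ∀ k, ᾱ.symm (ι₂ k) = ι₁ k := fun k => by
      rw [StarAlgEquiv.symm_apply_eq, hk]
    obtain ⟨φ, -⟩ := exists_starAlgEquiv_of_rel (fun (a : B₁) (b : B₂) => ᾱ (e₁ a) = e₂ b)
      (fun a => by
        have h : e₁ a ∈ relComm ι₁ := he₁r ▸ Set.mem_range_self a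
        have := map_mem_relComm hα hk h
        rw [← he₂r] at this
        exact this.imp fun b hb => hb.symm)
      (fun a b b' h h' => he₂ (h.symm.trans h'))
      (fun b => by
        have h : e₂ b ∈ relComm ι₂ := he₂r ▸ Set.mem_range_self b
        have := map_mem_relComm hα' hk' h
        rw [← he₁r] at this
        exact this.imp fun a ha => by rw [ha, StarAlgEquiv.apply_symm_apply])
      (fun a a' b h h' => he₁ (ᾱ.injective (h.trans h'.symm)))
      (fun a b a' b' h h' => by simp only [map_add, h, h'])
      (fun a b a' b' h h' => by simp only [map_mul, h, h'])
      (fun z a b h => by simp only [map_smul, h])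
      (fun a b h => by simp only [map_star, h])
    exact ⟨φ⟩
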